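/- Let t ≥ 0. The edge set of the complete multipartite graph K_{(6t+3)(7)} with 6t+3 parts of size 7 can be partitioned into 3t+1 K_{7,7,7}-factors, where each K_{7,7,7}-factor has the parts of K_{(6t+3)(7)} as the partite sets of its tripartite components. -/

import Mathlib

open SimpleGraph

/-- `F` is an `H`-factor (of the complete graph on its vertex type, or of any graph
containing it): every connected component of `F`, viewed as an induced subgraph,
is isomorphic to `H`.  Since `F` is a graph on all of `V`, it is automatically spanning. -/
def IsHFactor {V W : Type*} (H : SimpleGraph W) (F : SimpleGraph V) : Prop :=
  ∀ c : F.ConnectedComponent, Nonempty (F.induce c.supp ≃g H)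

/-- A `C_k`-factor: a spanning subgraph each of whose connected components is a
cycle of length `k` (in particular it is 2-regular). -/
def IsCycleFactor {V : Type*} (k : ℕ) (F : SimpleGraph V) : Prop :=
  IsHFactor (SimpleGraph.cycleGraph k) F

/-- `(G; C_m^r, C_k^s)`: a partition of the edge set of `G` into `r` `C_m`-factors
and `s` `C_k`-factors. -/
def IsCycleDecomp {V : Type*} (G : SimpleGraph V) (m k r s : ℕ) : Prop :=
  ∃ F : Fin r ⊕ Fin s → SimpleGraph V,
    (∀ i, F i ≤ G) ∧
    (∀ e ∈ G.edgeSet, ∃! i, e ∈ (F i).edgeSet) ∧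
    (∀ i : Fin r, IsCycleFactor m (F (Sum.inl i))) ∧
    (∀ j : Fin s, IsCycleFactor k (F (Sum.inr j)))

/-- The complete tripartite graph `K_{7,7,7}` on vertex set `Z₇ × Z₃`, with the three
partite sets `V_i = Z₇ × {i}` for `i ∈ Z₃` (the vertex `j_i` is the pair `(j, i)`). -/
def K777 : SimpleGraph (ZMod 7 × ZMod 3) where
  Adj x y := x.2 ≠ y.2
  symm := ⟨fun _ _ h => h.symm⟩
  loopless := ⟨fun _ h => h rfl⟩

/-- The edge set `E_{ij}(d) = {{l_i, (l+d)_j} : l ∈ Z₇}`. -/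
def Eij (i j : ZMod 3) (d : ZMod 7) : Set (Sym2 (ZMod 7 × ZMod 3)) :=
  {e | ∃ l : ZMod 7, e = s((l, i), (l + d, j))}

/-- The complete multipartite graph `K_{(6t+3)(7)}` with `6t+3` parts of size `7`;
the vertex `j` of the part `p` is the pair `(p, j)`. -/
def KMulti (t : ℕ) : SimpleGraph (Fin (6 * t + 3) × Fin 7) where
  Adj x y := x.1 ≠ y.1
  symm := ⟨fun _ _ h => h.symm⟩
  loopless := ⟨fun _ h => h rfl⟩

/-!
A Kirkman triple system on `6t+3` points has `3t+1` parallel classes of triples. Blowing up every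
point to an independent set of seven vertices and every triple to a `K_{7,7,7}` turns each parallel
class into a factor, so it suffices to construct Kirkman triple systems of all these orders.

Deleting a point from such a system leaves a Kirkman frame with `r = 3t+1` holes of size two, and
conversely. Frames exist over every field with `q ≡ 1 (mod 6)` elements, as the translates of one
starter; the remaining small `r` come from explicit systems on 9 and 21 points, from tripling and
from difference families. Frames can be glued along pairwise balanced designs. Applied to a
transversal design with five groups of size `n`, one of them truncated to size `m`, and with all
points given weight three, this deduces `t = 4n+m` from `t = n` and `t = m`. Such designs reach
every `t ≥ 16` other than `26` and `27`.
-/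

/-! ### Kirkman triple systems and Kirkman frames -/

/-- The equivalence relations `s c` on `V` are the parallel classes of a Kirkman triple system:
each of them partitions `V` into triples, and any two points lie in a unique triple. -/
structure IsKTS {V C : Type*} (s : C → Setoid V) : Prop where
  ncard_class : ∀ c p, {q | s c p q}.ncard = 3
  existsUnique : ∀ p q, p ≠ q → ∃! c, s c p q

/-- A Kirkman frame of type `2 ^ X`, with holes `{y} × Bool`. The equivalence relation `s y`
consists of the hole of `y` as one class and of the triples of the corresponding holey parallel
class. -/
structure IsKirkmanFrame {X : Type*} (s : X → Setoid (X × Bool)) : Prop where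
  rel_hole : ∀ y a b, a.1 = y → (s y a b ↔ b.1 = y)
  ncard_class : ∀ y a, a.1 ≠ y → {b | s y a b}.ncard = 3
  existsUnique : ∀ a b, a ≠ b → ∃! y, s y a b

/-- Existence of a Kirkman frame of type `2 ^ X`, equivalently of a Kirkman triple system on
`2 * |X| + 1` points. -/
def HasKirkmanFrame (X : Type*) : Prop :=
  ∃ s : X → Setoid (X × Bool), IsKirkmanFrame s

namespace IsKirkmanFrame

variable {X : Type*} {s : X → Setoid (X × Bool)} (h : IsKirkmanFrame s)

include h

lemma fst_eq_iff {y : X} {a b : X × Bool} (hab : s y a b) : a.1 = y ↔ b.1 = y :=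
  ⟨fun ha => (h.rel_hole y a b ha).1 hab,
    fun hb => (h.rel_hole y b a hb).1 ((s y).symm' hab)⟩

lemma fst_ne_fst {y : X} {a b : X × Bool} (hab : s y a b) (ha : a.1 ≠ y) (hne : a ≠ b) :
    a.1 ≠ b.1 := fun heq =>
  ha ((h.existsUnique a b hne).unique ((h.rel_hole a.1 a b rfl).2 heq.symm) hab)

/-- A point at infinity joined to the holes turns a Kirkman frame into a Kirkman triple system. -/
lemma isKTS : IsKTS fun y => (s y).comap fun p : Option (X × Bool) => p.getD (y, true) where
  ncard_class y p := by
    simp only [Setoid.comap_rel]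
    generalize p.getD (y, true) = a
    by_cases ha : a.1 = y
    · have hclass : {q : Option (X × Bool) | s y a (q.getD (y, true))} =
          {none, some (y, true), some (y, false)} := by
        ext (_ | ⟨z, _ | _⟩) <;> simp [h.rel_hole y a _ ha]
      rw [hclass, Set.ncard_eq_three]
      exact ⟨_, _, _, by simp, by simp, by simp, rfl⟩
    · have hclass : {q : Option (X × Bool) | s y a (q.getD (y, true))} = some '' {b | s y a b} := by
        ext (_ | b)
        · simpa using fun hq => ha ((h.fst_eq_iff hq).2 rfl)
        · simp
      rw [hclass, Set.ncard_image_of_injective _ (Option.some_injective _), h.ncard_class y a ha]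
  existsUnique := by
    have hnone (a : X × Bool) : ∃! y, s y (y, true) a :=
      ⟨a.1, (h.rel_hole _ _ _ rfl).2 rfl, fun y hy => ((h.rel_hole _ _ _ rfl).1 hy).symm⟩
    rintro (_ | a) (_ | b) hne
    · exact absurd rfl hne
    · exact hnone b
    · exact (existsUnique_congr fun y => (s y).comm').1 (hnone a)
    · exact h.existsUnique a b fun hab => hne (congrArg some hab)

end IsKirkmanFrame

namespace IsKTS

variable {V C : Type*} {s : C → Setoid V} (h : IsKTS s)

include h

lemma exists_equiv_rel_iff (o : V) :
    ∃ e : C × Bool ≃ {q // q ≠ o}, ∀ c a, s c o (e a) ↔ a.1 = c := by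
  choose f hf hf_unique using fun q : {q // q ≠ o} => h.existsUnique o q q.2.symm
  have hrel (c : C) (q : {q // q ≠ o}) : s c o q ↔ f q = c :=
    ⟨fun hq => (hf_unique q c hq).symm, fun hq => hq ▸ hf q⟩
  have hcard (c : C) : Nat.card {q // f q = c} = 2 := by
    have hclass : (↑) '' {q | f q = c} = {q | s c o q} \ {o} := by
      ext q
      simp [← hrel, and_comm]
    calc Nat.card {q // f q = c} = ((↑) '' {q | f q = c} : Set V).ncard :=
          (Set.ncard_image_of_injective _ Subtype.val_injective).symm
      _ = {q | s c o q}.ncard - 1 := by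
          rw [hclass]
          exact Set.ncard_sdiff_singleton_of_mem ((s c).refl' o)
      _ = 2 := by rw [h.ncard_class]
  have hpair (c : C) : Nonempty (Bool ≃ {q // f q = c}) :=
    have := Nat.finite_of_card_ne_zero ((hcard c).trans_ne two_ne_zero)
    Finite.card_eq.1 (by rw [hcard, Nat.card_eq_fintype_card, Fintype.card_bool])
  refine ⟨(Equiv.sigmaEquivProd C Bool).symm.trans
    ((Equiv.sigmaCongrRight fun c => (hpair c).some).trans (Equiv.sigmaFiberEquiv f)), ?_⟩
  rintro c ⟨c', b⟩
  rw [hrel]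
  exact Eq.congr_left ((hpair c').some b).2

/-- Conversely to `IsKirkmanFrame.isKTS`, deleting the point `o` leaves a Kirkman frame. -/
lemma hasKirkmanFrame (o : V) : HasKirkmanFrame C := by
  obtain ⟨e, he⟩ := h.exists_equiv_rel_iff o
  refine ⟨fun c => (s c).comap fun a => (e a : V), ⟨fun y a b ha => ?_, fun y a ha => ?_, ?_⟩⟩
  · have hoa : s y o (e a) := (he y a).2 ha
    rw [← he y b, Setoid.comap_rel]
    exact ⟨(s y).trans' hoa, (s y).trans' ((s y).symm' hoa)⟩
  · have hclass : (fun b => (e b : V)) '' {b | s y (e a) (e b)} = {q | s y (e a) q} := by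
      ext q
      refine ⟨fun ⟨_, hb, hbq⟩ => hbq ▸ hb, fun hq => ?_⟩
      have hqo : q ≠ o := fun hqo => ha ((he y a).1 ((s y).symm' (hqo ▸ hq)))
      exact ⟨e.symm ⟨q, hqo⟩, by simpa using hq, by simp⟩
    rw [← h.ncard_class y (e a), ← hclass]
    exact (Set.ncard_image_of_injective _ (Subtype.val_injective.comp e.injective)).symm
  · intro a b hab
    exact h.existsUnique _ _ fun heq => hab (e.injective (Subtype.ext heq))

lemma comap_equiv {W : Type*} (e : W ≃ V) : IsKTS fun c => (s c).comap e where
  ncard_class c p := by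
    rw [← h.ncard_class c (e p)]
    exact Set.ncard_preimage_of_injective_subset_range e.injective fun q _ => e.surjective q
  existsUnique p q hpq := h.existsUnique _ _ (e.injective.ne hpq)

end IsKTS

lemma HasKirkmanFrame.congr {X Y : Type*} (e : X ≃ Y) (h : HasKirkmanFrame X) :
    HasKirkmanFrame Y := by
  obtain ⟨s, hs⟩ := h
  let e₂ : Y × Bool ≃ X × Bool := e.symm.prodCongr (Equiv.refl Bool)
  refine ⟨fun y => (s (e.symm y)).comap e₂,
    ⟨fun y a b ha => ?_, fun y a ha => ?_, fun a b hab => ?_⟩⟩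
  · exact (hs.rel_hole _ _ _ (congrArg e.symm ha)).trans e.symm.injective.eq_iff
  · rw [← hs.ncard_class (e.symm y) (e₂ a) fun heq => ha (e.symm.injective heq)]
    exact Set.ncard_preimage_of_injective_subset_range e₂.injective fun b _ => e₂.surjective b
  · refine (e.symm.existsUnique_congr fun {y} => ?_).2 (hs.existsUnique _ _ (e₂.injective.ne hab))
    rfl

/-- The orders `r` of Kirkman frames of type `2 ^ r`. -/
def kirkmanFrameOrders : Set ℕ :=
  {r | HasKirkmanFrame (Fin r)}

lemma hasKirkmanFrame_iff {X : Type*} [Finite X] :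
    HasKirkmanFrame X ↔ Nat.card X ∈ kirkmanFrameOrders :=
  ⟨.congr (Finite.equivFin X), .congr (Finite.equivFin X).symm⟩

/-! ### Starters -/

section Starter

variable {G κ : Type*} [AddCommGroup G]

/-- A colouring of `G × Bool` whose colour classes are the hole `{0} × Bool` and the triples of one
holey parallel class of a Kirkman frame, with `f i x` the colour of `(x, i)`. The last two
conditions say that every pair of points is a translate of exactly one monochromatic pair. -/
structure IsFrameStarter (f : Bool → G → κ) : Prop where
  eq_color_zero_iff : ∀ i x, f i x = f false 0 ↔ x = 0
  ncard_color : ∀ i x, x ≠ 0 → {a : G × Bool | f i x = f a.2 a.1}.ncard = 3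
  existsUnique_pure : ∀ i d, d ≠ 0 → ∃! x, f i x = f i (x + d)
  existsUnique_mixed : ∀ d, ∃! x, f false x = f true (x + d)

namespace IsFrameStarter

variable {f : Bool → G → κ} (h : IsFrameStarter f)

include h

lemma existsUnique_color_sub (a b : G × Bool) (hab : a ≠ b) :
    ∃! y, f a.2 (a.1 - y) = f b.2 (b.1 - y) := by
  obtain ⟨p, i⟩ := a
  obtain ⟨q, j⟩ := b
  have hshift (p q : G) (i j : Bool) (hd : ∃! x, f i x = f j (x + (q - p))) :
      ∃! y, f i (p - y) = f j (q - y) :=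
    ((Equiv.subLeft p).existsUnique_congr fun {y} => by simp).2 hd
  obtain rfl | hij := eq_or_ne i j
  · exact hshift p q i i (h.existsUnique_pure i _ (sub_ne_zero.2 fun hqp => hab (by rw [hqp])))
  · cases i <;> cases j
    · exact absurd rfl hij
    · exact hshift p q _ _ (h.existsUnique_mixed _)
    · exact (existsUnique_congr fun _ => eq_comm).1 (hshift q p _ _ (h.existsUnique_mixed _))
    · exact absurd rfl hij

/-- The translates of a starter are the holey parallel classes of a Kirkman frame. -/
lemma hasKirkmanFrame : HasKirkmanFrame G := by
  refine ⟨fun y => Setoid.ker fun a : G × Bool => f a.2 (a.1 - y),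
    ⟨fun y a b ha => ?_, fun y a ha => ?_, h.existsUnique_color_sub⟩⟩
  · have hzero := (h.eq_color_zero_iff a.2 (a.1 - y)).2 (sub_eq_zero.2 ha)
    rw [Setoid.ker_def, hzero, eq_comm, h.eq_color_zero_iff, sub_eq_zero]
  · rw [← h.ncard_color a.2 (a.1 - y) (sub_ne_zero.2 ha)]
    let e : G × Bool ≃ G × Bool := (Equiv.subRight y).prodCongr (Equiv.refl Bool)
    exact Set.ncard_preimage_of_injective_subset_range
      (s := {b | f a.2 (a.1 - y) = f b.2 b.1}) e.injective fun b _ => e.surjective b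

end IsFrameStarter

end Starter

section Field

variable {F : Type*} [Field F] {ζ : F} {P : Set F}

/-- The set `P` contains exactly one of `x` and `-x` for every nonzero `x`, and it is a union of
cosets of the group generated by `ζ`. -/
structure IsCubicHalfSet (ζ : F) (P : Set F) : Prop where
  zero_notMem : 0 ∉ P
  mul_mem_iff : ∀ {x}, ζ * x ∈ P ↔ x ∈ P
  neg_mem_iff : ∀ {x}, x ≠ 0 → (-x ∈ P ↔ x ∉ P)

lemma exists_isCubicHalfSet (h2 : (2 : F) ≠ 0) (hζ : ζ ^ 3 = 1) :
    ∃ P, IsCubicHalfSet ζ P := by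
  refine ⟨{x | WellOrderingRel (x ^ 3) (-x ^ 3)}, ?_, ?_, fun {x} hx => ?_⟩
  · simpa using irrefl (0 : F)
  · simp [mul_pow, hζ]
  · have hne : x ^ 3 ≠ -x ^ 3 := fun heq => mul_ne_zero h2 (pow_ne_zero 3 hx) <| by
      linear_combination heq
    simp only [Set.mem_ofPred_eq, Odd.neg_pow (by decide : Odd 3), neg_neg]
    exact ⟨fun h h' => asymm h h', fun h =>
      ((trichotomous_of WellOrderingRel _ _).resolve_left h).resolve_left hne⟩

open Classical in
/-- The colouring of level `0` of the starter over a field with a primitive cube root of unity `ζ`: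
its classes off the hole are the pairs `{x, -ζ² x}` for `x ∈ P`. -/
noncomputable def lowerColor (ζ : F) (P : Set F) (x : F) : F × F :=
  if x ∈ P then (x, 0) else (-ζ * x, 0)

open Classical in
/-- The colouring of level `1` of the starter, up to scaling: a point `w ∈ P` completes the pair
`{w, -ζ² w}` of level `0` to a triple, and the remaining points form the triples
`{w, ζ w, ζ² w}`. -/
noncomputable def upperColor (P : Set F) (w : F) : F × F :=
  if w ∈ P then (w, 0) else (0, w ^ 3)

/-- The starter over a field with a primitive cube root of unity `ζ`. Its classes off the hole are
the triples `{(x, 0), (-ζ² x, 0), (μ x, 1)}` for `x ∈ P`, where `μ = 1 - ζ²`, and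
`{(μ w, 1), (μ ζ w, 1), (μ ζ² w, 1)}` for nonzero `w ∉ P`. -/
noncomputable def cubicColor (ζ : F) (P : Set F) : Bool → F → F × F
  | false, x => lowerColor ζ P x
  | true, x => upperColor P (x / (1 - ζ ^ 2))

lemma sq_add_self_add_one_eq_zero (hζ : IsPrimitiveRoot ζ 3) : ζ ^ 2 + ζ + 1 = 0 := by
  have hsum := hζ.geom_sum_eq_zero (by norm_num)
  simp only [Finset.sum_range_succ, Finset.sum_range_zero] at hsum
  linear_combination hsum

lemma one_sub_sq_ne_zero (hζ : IsPrimitiveRoot ζ 3) : 1 - ζ ^ 2 ≠ 0 :=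
  sub_ne_zero.2 (hζ.pow_ne_one_of_pos_of_lt two_ne_zero (by norm_num)).symm

lemma cube_eq_cube_iff (hζ : IsPrimitiveRoot ζ 3) {x y : F} :
    x ^ 3 = y ^ 3 ↔ y = x ∨ y = ζ * x ∨ y = ζ ^ 2 * x := by
  have hfactor : (y - x) * (y - ζ * x) * (y - ζ ^ 2 * x) = y ^ 3 - x ^ 3 := by
    linear_combination
      (x ^ 2 * y * ζ - x * y ^ 2 - x ^ 3 * (ζ - 1)) * sq_add_self_add_one_eq_zero hζ
  rw [eq_comm, ← sub_eq_zero, ← hfactor, mul_eq_zero, mul_eq_zero, sub_eq_zero, sub_eq_zero,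
    sub_eq_zero, or_assoc]

namespace IsCubicHalfSet

variable (h : IsCubicHalfSet ζ P)

include h

lemma neg_mul_mem_iff (hζ : ζ ≠ 0) {x : F} (hx : x ≠ 0) : -ζ * x ∈ P ↔ x ∉ P := by
  rw [neg_mul, h.neg_mem_iff (mul_ne_zero hζ hx), h.mul_mem_iff]

lemma notMem_of_neg_mul_mem (hζ : ζ ≠ 0) {x : F} (hx : -ζ * x ∈ P) : x ∉ P :=
  (h.neg_mul_mem_iff hζ (by rintro rfl; simp [h.zero_notMem] at hx)).1 hx

lemma sq_mul_mem_iff {x : F} : ζ ^ 2 * x ∈ P ↔ x ∈ P := by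
  rw [sq, mul_assoc, h.mul_mem_iff, h.mul_mem_iff]

lemma lowerColor_eq_lowerColor_iff (hζ : ζ ≠ 0) {x y : F} :
    lowerColor ζ P x = lowerColor ζ P y ↔
      x = y ∨ (x ∈ P ∧ x = -ζ * y) ∨ (y ∈ P ∧ y = -ζ * x) := by
  have hP (x : F) := h.notMem_of_neg_mul_mem hζ (x := x)
  unfold lowerColor
  split_ifs with hx hy hy
  · grind
  · grind
  · grind
  · simp [hx, hy, hζ]

lemma upperColor_eq_upperColor_iff (hζ : IsPrimitiveRoot ζ 3) {x y : F} :
    upperColor P x = upperColor P y ↔ x = y ∨ (x ∉ P ∧ (y = ζ * x ∨ y = ζ ^ 2 * x)) := by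
  have hx_mul := h.mul_mem_iff (x := x)
  have hx_sq_mul := h.sq_mul_mem_iff (x := x)
  have h0 := h.zero_notMem
  unfold upperColor
  split_ifs with hx hy hy
  · grind
  · grind
  · grind
  · simp [hx, cube_eq_cube_iff hζ, eq_comm]

lemma lowerColor_eq_upperColor_iff (hζ : ζ ≠ 0) {x w : F} :
    lowerColor ζ P x = upperColor P w ↔ (w ∈ P ∧ (w = x ∨ w = -ζ * x)) ∨ (x = 0 ∧ w = 0) := by
  have hP := h.notMem_of_neg_mul_mem hζ (x := x)
  have h0 := h.zero_notMem
  unfold lowerColor upperColor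
  split_ifs with hx hw hw
  · grind
  · grind
  · grind
  · simp [hw, hζ, eq_comm (a := (0 : F))]

lemma existsUnique_lowerColor_eq_add (hζ : IsPrimitiveRoot ζ 3) {d : F} (hd : d ≠ 0) :
    ∃! x, lowerColor ζ P x = lowerColor ζ P (x + d) := by
  have hζ0 : ζ ≠ 0 := hζ.ne_zero three_ne_zero
  have hroot := sq_add_self_add_one_eq_zero hζ
  have hsol (x : F) : lowerColor ζ P x = lowerColor ζ P (x + d) ↔
      (d ∈ P ∧ x = ζ ^ 2 * d) ∨ (d ∉ P ∧ x = ζ * d) := by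
    have hfst : x = -ζ * (x + d) ↔ x = ζ ^ 2 * d := by grind
    have hsnd : x + d = -ζ * x ↔ x = ζ * d := by grind
    rw [h.lowerColor_eq_lowerColor_iff hζ0, or_iff_right (by simpa using hd)]
    have hmul := h.mul_mem_iff (x := d)
    have hsq_mul := h.sq_mul_mem_iff (x := d)
    have hneg := h.neg_mul_mem_iff hζ0 (mul_ne_zero hζ0 hd)
    grind
  simp only [hsol]
  by_cases hdP : d ∈ P <;> simp [hdP]

lemma existsUnique_upperColor_eq_add (hζ : IsPrimitiveRoot ζ 3) {d : F} (hd : d ≠ 0) :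
    ∃! x, upperColor P x = upperColor P (x + d) := by
  have hζ1 : ζ - 1 ≠ 0 := sub_ne_zero.2 (hζ.ne_one (by norm_num))
  have hroot := sq_add_self_add_one_eq_zero hζ
  have hsol (x : F) : upperColor P x = upperColor P (x + d) ↔
      x ∉ P ∧ (x = d / (ζ - 1) ∨ x = -ζ * (d / (ζ - 1))) := by
    rw [h.upperColor_eq_upperColor_iff hζ]
    grind
  have hneg := h.neg_mul_mem_iff (hζ.ne_zero three_ne_zero) (div_ne_zero hd hζ1)
  simp only [hsol]
  by_cases hv : d / (ζ - 1) ∈ P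
  · exact ⟨-ζ * (d / (ζ - 1)), by grind⟩
  · exact ⟨d / (ζ - 1), by grind⟩

lemma existsUnique_lowerColor_eq_upperColor (hζ : IsPrimitiveRoot ζ 3) (d : F) :
    ∃! x, lowerColor ζ P x = upperColor P ((x + d) / (1 - ζ ^ 2)) := by
  have hμ := one_sub_sq_ne_zero hζ
  have hroot := sq_add_self_add_one_eq_zero hζ
  have hsol (x : F) : lowerColor ζ P x = upperColor P ((x + d) / (1 - ζ ^ 2)) ↔
      (-ζ * d ∈ P ∧ x = -ζ * d) ∨ (-ζ * d ∉ P ∧ x = -ζ ^ 2 * d) := by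
    rw [h.lowerColor_eq_upperColor_iff (hζ.ne_zero three_ne_zero)]
    have hfst : (x + d) / (1 - ζ ^ 2) = x ↔ x = -ζ * d := by grind
    have hsnd : (x + d) / (1 - ζ ^ 2) = -ζ * x ↔ x = -ζ ^ 2 * d := by grind
    have hneg := h.neg_mul_mem_iff (hζ.ne_zero three_ne_zero) (x := d)
    have h0 := h.zero_notMem
    grind
  simp only [hsol]
  by_cases hdP : -ζ * d ∈ P <;> simp only [hdP] <;> simp

lemma setOf_cubicColor_eq_of_mem (hζ : IsPrimitiveRoot ζ 3) {x : F} (hx : x ∈ P) :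
    {a : F × Bool | cubicColor ζ P false x = cubicColor ζ P a.2 a.1} =
      {(x, false), (-ζ ^ 2 * x, false), ((1 - ζ ^ 2) * x, true)} := by
  have hζ0 := hζ.ne_zero three_ne_zero
  have hμ := one_sub_sq_ne_zero hζ
  have hroot := sq_add_self_add_one_eq_zero hζ
  have h0 := h.zero_notMem
  have hP (y : F) := h.notMem_of_neg_mul_mem hζ0 (x := y)
  ext ⟨y, _ | _⟩
  · have hsnd : x = -ζ * y ↔ y = -ζ ^ 2 * x := by grind
    simp only [cubicColor, Set.mem_ofPred_eq, h.lowerColor_eq_lowerColor_iff hζ0, neg_mul,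
      Set.mem_insert_iff, Prod.mk.injEq, and_true, Set.mem_singleton_iff, Bool.false_eq_true,
      and_false, or_false]
    grind
  · have hsnd : y / (1 - ζ ^ 2) = x ↔ y = (1 - ζ ^ 2) * x := by grind
    simp only [cubicColor, Set.mem_ofPred_eq, h.lowerColor_eq_upperColor_iff hζ0, neg_mul,
      div_eq_zero_iff, Set.mem_insert_iff, Prod.mk.injEq, Bool.true_eq_false, and_false,
      Set.mem_singleton_iff, and_true, false_or]
    grind

lemma ncard_cubicColor_eq_of_mem (hζ : IsPrimitiveRoot ζ 3) {x : F} (hx : x ∈ P) :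
    {a : F × Bool | cubicColor ζ P false x = cubicColor ζ P a.2 a.1}.ncard = 3 := by
  have hne : x ≠ -ζ ^ 2 * x := fun heq => by
    have hmem : -ζ * (ζ * x) ∈ P := by
      have hmul : -ζ * (ζ * x) = -ζ ^ 2 * x := by ring
      rwa [hmul, ← heq]
    exact h.notMem_of_neg_mul_mem (hζ.ne_zero three_ne_zero) hmem (h.mul_mem_iff.2 hx)
  rw [h.setOf_cubicColor_eq_of_mem hζ hx, Set.ncard_eq_three]
  exact ⟨_, _, _, by simpa using hne, by simp, by simp, rfl⟩

lemma setOf_cubicColor_eq_of_notMem (hζ : IsPrimitiveRoot ζ 3) {w : F} (hw : w ∉ P)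
    (hw0 : w ≠ 0) :
    {a : F × Bool | cubicColor ζ P true ((1 - ζ ^ 2) * w) = cubicColor ζ P a.2 a.1} =
      (fun v => ((1 - ζ ^ 2) * v, true)) '' {w, ζ * w, ζ ^ 2 * w} := by
  have hζ0 := hζ.ne_zero three_ne_zero
  have hμ := one_sub_sq_ne_zero hζ
  ext ⟨y, _ | _⟩
  · simp [cubicColor, eq_comm (a := upperColor P _), h.lowerColor_eq_upperColor_iff hζ0, hw, hw0,
      hμ]
  · have hdiv (v : F) : (1 - ζ ^ 2) * v = y ↔ y / (1 - ζ ^ 2) = v := by grind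
    simp only [cubicColor, mul_div_cancel_left₀ _ hμ, Set.mem_ofPred_eq,
      h.upperColor_eq_upperColor_iff hζ]
    simp [hw, hdiv, eq_comm (a := w)]

lemma ncard_cubicColor_eq_of_notMem (hζ : IsPrimitiveRoot ζ 3) {w : F} (hw : w ∉ P)
    (hw0 : w ≠ 0) :
    {a : F × Bool | cubicColor ζ P true ((1 - ζ ^ 2) * w) = cubicColor ζ P a.2 a.1}.ncard = 3 := by
  have hμ := one_sub_sq_ne_zero hζ
  have hζ0 := hζ.ne_zero three_ne_zero
  have hζ1 := hζ.ne_one (by norm_num)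
  have hinj : Function.Injective fun v : F => ((1 - ζ ^ 2) * v, true) := fun v v' hv =>
    mul_left_cancel₀ hμ (congrArg Prod.fst hv)
  rw [h.setOf_cubicColor_eq_of_notMem hζ hw hw0, Set.ncard_image_of_injective _ hinj,
    Set.ncard_eq_three]
  exact ⟨_, _, _, by grind, by grind, by grind, rfl⟩

lemma isFrameStarter_cubicColor (hζ : IsPrimitiveRoot ζ 3) :
    IsFrameStarter (cubicColor ζ P) := by
  have hζ0 := hζ.ne_zero three_ne_zero
  have hμ := one_sub_sq_ne_zero hζ
  have htriple (i x c) (hc : c ∈ P) (hx : cubicColor ζ P i x = cubicColor ζ P false c) :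
      {a : F × Bool | cubicColor ζ P i x = cubicColor ζ P a.2 a.1}.ncard = 3 := by
    rw [hx, h.ncard_cubicColor_eq_of_mem hζ hc]
  refine ⟨?_, ?_, ?_, h.existsUnique_lowerColor_eq_upperColor hζ⟩
  · rintro (_ | _) x
    · simp [cubicColor, h.lowerColor_eq_lowerColor_iff hζ0, h.zero_notMem]
    · simp [cubicColor, eq_comm (a := upperColor P _), h.lowerColor_eq_upperColor_iff hζ0, hμ]
  · rintro (_ | _) x hx
    · by_cases hxP : x ∈ P
      · exact h.ncard_cubicColor_eq_of_mem hζ hxP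
      · have hc := (h.neg_mul_mem_iff hζ0 hx).2 hxP
        exact htriple _ _ _ hc ((h.lowerColor_eq_lowerColor_iff hζ0).2 (.inr (.inr ⟨hc, rfl⟩)))
    · obtain ⟨w, rfl⟩ : ∃ w, (1 - ζ ^ 2) * w = x := ⟨_, mul_div_cancel₀ x hμ⟩
      by_cases hw : w ∈ P
      · exact htriple _ _ w hw (by simp [cubicColor, lowerColor, upperColor, hw, hμ])
      · exact h.ncard_cubicColor_eq_of_notMem hζ hw (right_ne_zero_of_mul hx)
  · rintro (_ | _) d hd
    · exact h.existsUnique_lowerColor_eq_add hζ hd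
    · refine ((Equiv.divRight₀ _ hμ).existsUnique_congr fun {x} => ?_).2
        (h.existsUnique_upperColor_eq_add hζ (div_ne_zero hd hμ))
      simp [cubicColor, add_div]

end IsCubicHalfSet

lemma hasKirkmanFrame_of_isPrimitiveRoot (hζ : IsPrimitiveRoot ζ 3) (h2 : (2 : F) ≠ 0) :
    HasKirkmanFrame F := by
  obtain ⟨P, hP⟩ := exists_isCubicHalfSet h2 hζ.pow_eq_one
  exact (hP.isFrameStarter_cubicColor hζ).hasKirkmanFrame

end Field

lemma mem_kirkmanFrameOrders_of_isPrimePow {q : ℕ} (hq : IsPrimePow q) (hq6 : q % 6 = 1) :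
    q ∈ kirkmanFrameOrders := by
  obtain ⟨p, k, hp, hk, rfl⟩ := hq
  have : Fact p.Prime := ⟨hp.nat_prime⟩
  have hcard : Nat.card (GaloisField p k) = p ^ k := GaloisField.card p k hk.ne'
  have := Nat.finite_of_card_ne_zero (hcard.trans_ne (by omega))
  have h2 : (2 : GaloisField p k) ≠ 0 := fun h2 => by
    have hdvd : p ∣ 2 := (CharP.cast_eq_zero_iff (GaloisField p k) p 2).1 (mod_cast h2)
    obtain rfl : p = 2 := (Nat.prime_dvd_prime_iff_eq hp.nat_prime Nat.prime_two).1 hdvd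
    have := dvd_pow_self 2 hk.ne'
    omega
  obtain ⟨u, hu⟩ : ∃ u : (GaloisField p k)ˣ, orderOf u = 3 :=
    exists_prime_orderOf_dvd_card' 3 (by rw [Nat.card_units, hcard]; omega)
  have hζ : IsPrimitiveRoot (u : GaloisField p k) 3 :=
    hu ▸ IsPrimitiveRoot.coe_units_iff.2 (.orderOf u)
  exact hcard ▸ hasKirkmanFrame_iff.1 (hasKirkmanFrame_of_isPrimitiveRoot hζ h2)

/-! ### Two small Kirkman triple systems -/

/-- The tetracode, a linear code of length four and minimum distance three over the field with three
elements. -/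
def tetracode (w : ZMod 3 × ZMod 3) : Fin 4 → ZMod 3 :=
  ![w.1, w.2, w.1 + w.2, w.1 - w.2]

lemma four_mem_kirkmanFrameOrders : 4 ∈ kirkmanFrameOrders := by
  have h : IsKTS fun i => Setoid.ker fun w => tetracode w i := by
    refine ⟨?_, ?_⟩
    · simp only [Set.ncard_eq_toFinset_card', Setoid.ker_def]
      decide +kernel
    · simp only [Setoid.ker_def, ExistsUnique]
      decide +kernel
  exact h.hasKirkmanFrame 0

/-- The parallel classes of a Kirkman triple system on `ZMod 7 × ZMod 3`, as colourings. With
`P = {1, 2, 4}`, the class of `u : ZMod 7` is the translate by `u` of the triples `P × {j}` and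
`{(z, 0), (2 z, 1), (4 z, 2)}` for `z ∉ P`. The class of `k : ZMod 3` consists of the translates of
`{(p, 0), (2 p, 1), (4 p, 2)}`, where `p = 2 ^ k`. -/
def kts21Color : ZMod 7 ⊕ ZMod 3 → ZMod 7 × ZMod 3 → ZMod 7 ⊕ ZMod 3
  | .inl u, (x, j) =>
    if x - u = 1 ∨ x - u = 2 ∨ x - u = 4 then .inr j else .inl (![1, 4, 2] j * (x - u))
  | .inr k, (x, j) => .inl (x - ![1, 2, 4] k * ![1, 2, 4] j)

lemma isKTS_kts21Color : IsKTS fun c => Setoid.ker (kts21Color c) := by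
  constructor
  · simp only [Set.ncard_eq_toFinset_card', Setoid.ker_def]
    decide +kernel
  · simp only [Setoid.ker_def, ExistsUnique]
    decide +kernel

lemma ten_mem_kirkmanFrameOrders : 10 ∈ kirkmanFrameOrders := by
  have h := hasKirkmanFrame_iff.1 (isKTS_kts21Color.hasKirkmanFrame 0)
  rwa [Nat.card_sum, Nat.card_zmod, Nat.card_zmod] at h

/-! ### Pairwise balanced designs -/

/-- A pairwise balanced design on `X`: the lines are the blocks `B i` together with the classes of
the equivalence relations `s c`, and any two points lie on a unique line. The case `C = Unit` is a
group divisible design, and the case `ι = Empty` is a resolvable design. -/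
structure IsPBD {X ι C : Type*} (B : ι → Set X) (s : C → Setoid X) : Prop where
  exists_line : ∀ x y, x ≠ y → (∃ i, x ∈ B i ∧ y ∈ B i) ∨ ∃ c, s c x y
  block_unique : ∀ x y, x ≠ y → ∀ i, x ∈ B i → y ∈ B i → ∀ j, x ∈ B j → y ∈ B j → i = j
  class_unique : ∀ x y, x ≠ y → ∀ c, s c x y → ∀ d, s d x y → c = d
  not_both : ∀ x y, x ≠ y → ∀ i, x ∈ B i → y ∈ B i → ∀ c, ¬ s c x y

namespace IsPBD

section Glue

variable {X ι C : Type*} [IsEmpty C] {B : ι → Set X} {s : C → Setoid X} (hB : IsPBD B s)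

include hB

lemma exists_block {x y : X} (hxy : x ≠ y) : ∃ i, x ∈ B i ∧ y ∈ B i :=
  (hB.exists_line x y hxy).resolve_right fun ⟨c, _⟩ => isEmptyElim c

omit hB in
/-- The union of the holey parallel classes at `y` of Kirkman frames on the blocks through `y`. -/
def GlueRel (r : ∀ i, B i → Setoid (B i × Bool)) (y : X) (a b : X × Bool) : Prop :=
  ∃ (i : ι) (y' : B i) (a' b' : B i × Bool), y' = y ∧ a'.map (↑) id = a ∧ b'.map (↑) id = b ∧
    a'.1 ≠ y' ∧ r i y' a' b'

variable {r : ∀ i, B i → Setoid (B i × Bool)} (hr : ∀ i, IsKirkmanFrame (r i))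

omit hB in
lemma map_val_injective (i : ι) :
    Function.Injective (Prod.map (↑) id : B i × Bool → X × Bool) :=
  Subtype.val_injective.prodMap Function.injective_id

omit [IsEmpty C] in
lemma glueRel_iff {i : ι} {y : B i} {a : B i × Bool} (ha : a.1 ≠ y) (b : X × Bool) :
    GlueRel r y (a.map (↑) id) b ↔ ∃ b', b'.map (↑) id = b ∧ r i y a b' := by
  refine ⟨?_, fun ⟨b', hb, h⟩ => ⟨i, y, a, b', rfl, rfl, hb, ha, h⟩⟩
  rintro ⟨j, y', a', b', hy, hab, rfl, -, h⟩
  have ha' : (a'.1 : X) = a.1 := congrArg Prod.fst hab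
  obtain rfl := hB.block_unique a.1 y (Subtype.coe_injective.ne ha) i a.1.2 y.2 j
    (ha' ▸ a'.1.2) (hy ▸ y'.2)
  obtain rfl := Subtype.ext hy
  obtain rfl := map_val_injective i hab
  exact ⟨b', rfl, h⟩

include hr

omit hB in
lemma GlueRel.fst_ne {y : X} {a b : X × Bool} (h : GlueRel r y a b) : a.1 ≠ y ∧ b.1 ≠ y := by
  obtain ⟨i, y, a, b, rfl, rfl, rfl, ha, h⟩ := h
  exact ⟨Subtype.coe_injective.ne ha,
    Subtype.coe_injective.ne fun hb => ha (((hr i).fst_eq_iff h).2 hb)⟩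

/-- At `y`, the hole of `y` and the classes of the frames on the blocks through `y`. -/
def glue (y : X) : Setoid (X × Bool) where
  r a b := a.1 = y ∧ b.1 = y ∨ GlueRel r y a b
  iseqv.refl a := by
    by_cases ha : a.1 = y
    · exact .inl ⟨ha, ha⟩
    · obtain ⟨i, hai, hyi⟩ := hB.exists_block ha
      exact .inr ⟨i, ⟨y, hyi⟩, (⟨a.1, hai⟩, a.2), _, rfl, rfl, rfl, by simpa using ha,
        (r i _).refl' _⟩
  iseqv.symm := by
    rintro a b (⟨ha, hb⟩ | ⟨i, y, a, b, rfl, rfl, rfl, ha, h⟩)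
    · exact .inl ⟨hb, ha⟩
    · exact .inr ⟨i, y, b, a, rfl, rfl, rfl, mt ((hr i).fst_eq_iff h).2 ha, (r i y).symm' h⟩
  iseqv.trans := by
    rintro a b c (⟨ha, hb⟩ | hab) (⟨hb', hc⟩ | hbc)
    · exact .inl ⟨ha, hc⟩
    · exact absurd hb (hbc.fst_ne hr).1
    · exact absurd hb' (hab.fst_ne hr).2
    · obtain ⟨i, y, a, b, rfl, rfl, rfl, ha, h⟩ := hab
      obtain ⟨c, rfl, h'⟩ := (hB.glueRel_iff (mt ((hr i).fst_eq_iff h).2 ha) c).1 hbc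
      exact .inr ⟨i, y, a, c, rfl, rfl, rfl, ha, (r i y).trans' h h'⟩

lemma existsUnique_glue {a b : X × Bool} (hfst : a.1 ≠ b.1) : ∃! y, hB.glue hr y a b := by
  obtain ⟨i, hai, hbi⟩ := hB.exists_block hfst
  obtain ⟨a, rfl⟩ : ∃ a' : B i × Bool, a'.map (↑) id = a := ⟨(⟨a.1, hai⟩, a.2), rfl⟩
  obtain ⟨b, rfl⟩ : ∃ b' : B i × Bool, b'.map (↑) id = b := ⟨(⟨b.1, hbi⟩, b.2), rfl⟩
  obtain ⟨y, hy, hy_unique⟩ := (hr i).existsUnique a b fun h =>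
    hfst (congrArg (fun p => (p.1 : X)) h)
  have ha : a.1 ≠ y := fun ha =>
    hfst (congrArg Subtype.val (ha.trans (((hr i).fst_eq_iff hy).1 ha).symm))
  refine ⟨y, .inr ⟨i, y, a, b, rfl, rfl, rfl, ha, hy⟩, ?_⟩
  rintro z (⟨ha, hb⟩ | ⟨j, z, a', b', rfl, haa, hbb, -, h⟩)
  · exact absurd (ha.trans hb.symm) hfst
  · obtain rfl := hB.block_unique _ _ hfst i a.1.2 b.1.2 j
      (congrArg Prod.fst haa ▸ a'.1.2) (congrArg Prod.fst hbb ▸ b'.1.2)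
    obtain rfl := map_val_injective i haa
    obtain rfl := map_val_injective i hbb
    exact congrArg Subtype.val (hy_unique z h)

lemma isKirkmanFrame_glue : IsKirkmanFrame (hB.glue hr) where
  rel_hole y a b ha := by
    refine ⟨?_, fun hb => .inl ⟨ha, hb⟩⟩
    rintro (⟨-, hb⟩ | h)
    exacts [hb, absurd ha (h.fst_ne hr).1]
  ncard_class y a ha := by
    obtain ⟨i, hai, hyi⟩ := hB.exists_block ha
    lift y to B i using hyi
    obtain ⟨a, rfl⟩ : ∃ a' : B i × Bool, a'.map (↑) id = a := ⟨(⟨a.1, hai⟩, a.2), rfl⟩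
    have ha' : a.1 ≠ y := fun h => ha (congrArg Subtype.val h)
    have hclass : {b | hB.glue hr y (a.map (↑) id) b} = Prod.map (↑) id '' {b | r i y a b} := by
      ext b
      refine Iff.trans (or_iff_right fun h => ha h.1) ((hB.glueRel_iff ha' b).trans ?_)
      simp only [Set.mem_image, Set.mem_ofPred_eq, and_comm]
    rw [hclass, Set.ncard_image_of_injective _ (map_val_injective i), (hr i).ncard_class y a ha']
  existsUnique a b hab := by
    by_cases hfst : a.1 = b.1
    · refine ⟨a.1, .inl ⟨rfl, hfst.symm⟩, ?_⟩
      rintro y (⟨ha, -⟩ | ⟨i, y, a, b, rfl, rfl, rfl, ha, h⟩)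
      · exact ha.symm
      · exact absurd (Subtype.ext hfst)
          ((hr i).fst_ne_fst h ha fun h => hab (congrArg (Prod.map Subtype.val id) h))
    · exact hB.existsUnique_glue hr hfst

end Glue

lemma hasKirkmanFrame {X ι C : Type*} [IsEmpty C] {B : ι → Set X} {s : C → Setoid X}
    (hB : IsPBD B s) (hframe : ∀ i, HasKirkmanFrame (B i)) : HasKirkmanFrame X := by
  choose r hr using hframe
  exact ⟨hB.glue hr, hB.isKirkmanFrame_glue hr⟩

lemma comap {X Y ι C : Type*} {B : ι → Set X} {s : C → Setoid X} (hB : IsPBD B s) {f : Y → X}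
    (hf : Function.Injective f) : IsPBD (fun i => f ⁻¹' B i) (fun c => (s c).comap f) where
  exists_line _ _ hxy := hB.exists_line _ _ (hf.ne hxy)
  block_unique _ _ hxy := hB.block_unique _ _ (hf.ne hxy)
  class_unique _ _ hxy := hB.class_unique _ _ (hf.ne hxy)
  not_both _ _ hxy := hB.not_both _ _ (hf.ne hxy)

section Completion

variable {X ι C : Type*} {B : ι → Set X} {s : C → Setoid X}

/-- The completion of a pairwise balanced design: a point at infinity is added to all classes of
each equivalence relation, and the points at infinity form a further block. -/
def completion (B : ι → Set X) (s : C → Setoid X) :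
    Option (ι ⊕ Σ c, Quotient (s c)) → Set (X ⊕ C)
  | none => Set.range Sum.inr
  | some (.inl i) => Sum.inl '' B i
  | some (.inr ⟨c, q⟩) => insert (Sum.inr c) (Sum.inl '' {x | ⟦x⟧ = q})

lemma inl_inl_mem_completion {x y : X} {l : Option (ι ⊕ Σ c, Quotient (s c))} :
    Sum.inl x ∈ completion B s l ∧ Sum.inl y ∈ completion B s l ↔
      (∃ i, some (.inl i) = l ∧ x ∈ B i ∧ y ∈ B i) ∨
        ∃ c, some (.inr ⟨c, ⟦x⟧⟩) = l ∧ s c x y := by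
  obtain _ | i | ⟨c, q⟩ := l
  · simp [completion]
  · simp [completion]
  · suffices ⟦x⟧ = q ∧ ⟦y⟧ = q ↔ ∃ d, (⟨d, ⟦x⟧⟩ : Σ c, Quotient (s c)) = ⟨c, q⟩ ∧ s d x y by
      simpa [completion] using this
    constructor
    · rintro ⟨rfl, hy⟩
      exact ⟨c, rfl, (s c).symm' (Quotient.exact hy)⟩
    · rintro ⟨d, ⟨⟩, h⟩
      exact ⟨rfl, Quotient.sound (Setoid.symm' _ h)⟩

lemma inl_inr_mem_completion {x : X} {c : C} {l : Option (ι ⊕ Σ c, Quotient (s c))} :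
    Sum.inl x ∈ completion B s l ∧ Sum.inr c ∈ completion B s l ↔
      some (.inr ⟨c, ⟦x⟧⟩) = l := by
  obtain _ | i | ⟨d, q⟩ := l
  · simp [completion]
  · simp [completion]
  · simp only [completion, Set.mem_insert_iff, reduceCtorEq, Set.mem_image, Set.mem_ofPred_eq,
      Sum.inl.injEq, exists_eq_right, false_or, Sum.inr.injEq, and_false, exists_false, or_false,
      Option.some.injEq, Sigma.mk.injEq]
    grind

lemma inr_inr_mem_completion {c d : C} (hcd : c ≠ d) {l : Option (ι ⊕ Σ c, Quotient (s c))} :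
    Sum.inr c ∈ completion B s l ∧ Sum.inr d ∈ completion B s l ↔ none = l := by
  obtain _ | i | ⟨c, q⟩ := l
  · simp [completion]
  · simp [completion]
  · simp only [completion, Set.mem_insert_iff, Sum.inr.injEq, Set.mem_image, Set.mem_ofPred_eq,
      reduceCtorEq, and_false, exists_false, or_false, iff_false, not_and]
    grind

lemma completion_isPBD (hB : IsPBD B s) : IsPBD (completion B s) (Empty.elim : Empty → _) where
  exists_line := by
    rintro (x | c) (y | d) hxy
    · obtain ⟨i, h⟩ | ⟨c, h⟩ := hB.exists_line x y fun h => hxy (congrArg _ h)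
      · exact .inl ⟨_, inl_inl_mem_completion.2 (.inl ⟨i, rfl, h⟩)⟩
      · exact .inl ⟨_, inl_inl_mem_completion.2 (.inr ⟨c, rfl, h⟩)⟩
    · exact .inl ⟨_, inl_inr_mem_completion.2 rfl⟩
    · exact .inl ⟨_, (inl_inr_mem_completion.2 rfl).symm⟩
    · exact .inl ⟨_, (inr_inr_mem_completion fun h => hxy (congrArg _ h)).2 rfl⟩
  block_unique := by
    rintro (x | c) (y | d) hxy l hx hy l' hx' hy'
    · have hne : x ≠ y := fun h => hxy (congrArg _ h)
      obtain ⟨i, rfl, hi⟩ | ⟨c, rfl, hc⟩ := inl_inl_mem_completion.1 ⟨hx, hy⟩ <;>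
      obtain ⟨j, rfl, hj⟩ | ⟨d, rfl, hd⟩ := inl_inl_mem_completion.1 ⟨hx', hy'⟩
      · rw [hB.block_unique x y hne i hi.1 hi.2 j hj.1 hj.2]
      · exact absurd hd (hB.not_both x y hne i hi.1 hi.2 d)
      · exact absurd hc (hB.not_both x y hne j hj.1 hj.2 c)
      · rw [hB.class_unique x y hne c hc d hd]
    · rw [← inl_inr_mem_completion.1 ⟨hx, hy⟩, inl_inr_mem_completion.1 ⟨hx', hy'⟩]
    · rw [← inl_inr_mem_completion.1 ⟨hy, hx⟩, inl_inr_mem_completion.1 ⟨hy', hx'⟩]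
    · have hne : c ≠ d := fun h => hxy (congrArg _ h)
      rw [← (inr_inr_mem_completion hne).1 ⟨hx, hy⟩, (inr_inr_mem_completion hne).1 ⟨hx', hy'⟩]
  class_unique _ _ _ := nofun
  not_both _ _ _ _ _ _ := nofun

/-- The blocks of the completion are filled in with Kirkman frames. -/
lemma card_add_card_mem_kirkmanFrameOrders [Finite X] [Finite C] (hB : IsPBD B s)
    (hblock : ∀ i, (B i).ncard ∈ kirkmanFrameOrders)
    (hclass : ∀ c x, {y | s c x y}.ncard + 1 ∈ kirkmanFrameOrders)
    (hC : Nat.card C ∈ kirkmanFrameOrders) :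
    Nat.card X + Nat.card C ∈ kirkmanFrameOrders := by
  rw [← Nat.card_sum, ← hasKirkmanFrame_iff]
  refine hB.completion_isPBD.hasKirkmanFrame fun l => hasKirkmanFrame_iff.2 ?_
  rw [Nat.card_coe_set_eq]
  obtain _ | i | ⟨c, q⟩ := l
  · rwa [completion, ← Nat.card_coe_set_eq, Nat.card_range_of_injective Sum.inr_injective]
  · rw [completion, Set.ncard_image_of_injective _ Sum.inl_injective]
    exact hblock i
  · induction q using Quotient.inductionOn with | h x
    have hx : {y | ⟦y⟧ = (⟦x⟧ : Quotient (s c))} = {y | s c x y} :=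
      Set.ext fun y => Quotient.eq.trans (s c).comm'
    rw [completion, Set.ncard_insert_of_notMem (by simp),
      Set.ncard_image_of_injective _ Sum.inl_injective, hx]
    exact hclass c x

end Completion

end IsPBD

/-! ### Tripling and group divisible designs -/

lemma IsKTS.isPBD {V C : Type*} {s : C → Setoid V} (h : IsKTS s) :
    IsPBD (Empty.elim : Empty → Set V) s where
  exists_line x y hxy := .inr (h.existsUnique x y hxy).exists
  block_unique _ _ _ := nofun
  class_unique x y hxy _ hc _ hd := (h.existsUnique x y hxy).unique hc hd
  not_both _ _ _ := nofun

lemma one_mem_kirkmanFrameOrders : 1 ∈ kirkmanFrameOrders :=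
  ⟨fun _ => ⊤, fun _ _ _ _ => by simp [eq_iff_true_of_subsingleton, Setoid.top_def],
    fun _ _ h => absurd (Subsingleton.elim _ _) h,
    fun _ _ _ => ⟨0, trivial, fun _ _ => Subsingleton.elim _ _⟩⟩

/-- Tripling: a Kirkman triple system on `2 * r + 1` points has `r` parallel classes. -/
lemma three_mul_add_one_mem_kirkmanFrameOrders_of_mem {r : ℕ} (hr : r ∈ kirkmanFrameOrders) :
    3 * r + 1 ∈ kirkmanFrameOrders := by
  obtain ⟨s, hs⟩ := hr
  have hcard := hs.isKTS.isPBD.card_add_card_mem_kirkmanFrameOrders isEmptyElim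
    (fun c x => by
      rw [hs.isKTS.ncard_class]
      exact four_mem_kirkmanFrameOrders)
    (by simpa using ⟨s, hs⟩)
  have hr : Nat.card (Option (Fin r × Bool)) + Nat.card (Fin r) = 3 * r + 1 := by
    simp only [Nat.card_eq_fintype_card, Fintype.card_option, Fintype.card_prod, Fintype.card_fin,
      Fintype.card_bool]
    ring
  rwa [hr] at hcard

/-- A group divisible design with block sizes in `K`, whose groups are the classes of `s`. -/
def HasGDD {X : Type*} (s : Setoid X) (K : Set ℕ) : Prop :=
  ∃ (ι : Type) (B : ι → Set X), IsPBD B (fun _ : Unit => s) ∧ ∀ i, (B i).ncard ∈ K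

namespace HasGDD

variable {X Y W : Type*} {s : Setoid X} {K L : Set ℕ}

lemma mono (h : HasGDD s K) (hKL : K ⊆ L) : HasGDD s L :=
  let ⟨ι, B, hB, hK⟩ := h
  ⟨ι, B, hB, fun i => hKL (hK i)⟩

lemma card_add_one_mem_kirkmanFrameOrders [Finite X] (h : HasGDD s kirkmanFrameOrders)
    (hclass : ∀ x, {y | s x y}.ncard + 1 ∈ kirkmanFrameOrders) :
    Nat.card X + 1 ∈ kirkmanFrameOrders := by
  obtain ⟨ι, B, hB, hK⟩ := h
  simpa using hB.card_add_card_mem_kirkmanFrameOrders hK (fun _ => hclass)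
    (by simpa using one_mem_kirkmanFrameOrders)

lemma comap_equiv (h : HasGDD s K) (e : Y ≃ X) : HasGDD (s.comap e) K := by
  obtain ⟨ι, B, hB, hK⟩ := h
  refine ⟨ι, _, hB.comap e.injective, fun i => ?_⟩
  rw [Set.ncard_preimage_of_injective_subset_range e.injective fun x _ => e.surjective x]
  exact hK i

lemma ker_fst_congr (h : HasGDD (Setoid.ker (Prod.fst : X × W → X)) K) (e : Y ≃ X) :
    HasGDD (Setoid.ker (Prod.fst : Y × W → Y)) K := by
  have hker : (Setoid.ker Prod.fst).comap (e.prodCongr (Equiv.refl W)) =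
      Setoid.ker (Prod.fst : Y × W → Y) := Setoid.ext fun _ _ => e.injective.eq_iff
  exact hker ▸ h.comap_equiv (e.prodCongr (Equiv.refl W))

/-- Wilson's fundamental construction, with all points given the same weight: every point is
replaced by a copy of `W`, and every block by a group divisible design. -/
lemma comap_fst [Finite X] (h : HasGDD s K)
    (hW : ∀ k ∈ K, HasGDD (Setoid.ker (Prod.fst : Fin k × W → Fin k)) L) :
    HasGDD (s.comap (Prod.fst : X × W → X)) L := by
  obtain ⟨ι, B, hB, hK⟩ := h
  have hblock (i : ι) : HasGDD (Setoid.ker (Prod.fst : B i × W → B i)) L :=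
    (hW _ (hK i)).ker_fst_congr (Finite.equivFinOfCardEq (Nat.card_coe_set_eq _))
  choose κ D hD hL using hblock
  let f (i : ι) : B i × W → X × W := Prod.map (↑) id
  have hf (i : ι) : Function.Injective (f i) :=
    Subtype.val_injective.prodMap Function.injective_id
  have hfst {i : ι} {k : κ i} {p q : B i × W} (hpq : f i p ≠ f i q) (hp : p ∈ D i k)
      (hq : q ∈ D i k) : (f i p).1 ≠ (f i q).1 := fun h =>
    (hD i).not_both p q (fun h => hpq (congrArg _ h)) k hp hq () (Subtype.ext h)
  refine ⟨Σ i, κ i, fun b => f b.1 '' D b.1 b.2, ⟨fun p q _ => ?_, ?_, fun _ _ _ _ _ _ _ => rfl,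
    ?_⟩, fun ⟨i, k⟩ => ?_⟩
  · by_cases hs : s p.1 q.1
    · exact .inr ⟨(), hs⟩
    have hne : p.1 ≠ q.1 := fun h => hs (h ▸ s.refl' p.1)
    obtain ⟨i, hp, hq⟩ := (hB.exists_line _ _ hne).resolve_right fun h => hs h.choose_spec
    obtain ⟨k, hpk, hqk⟩ := ((hD i).exists_line (⟨p.1, hp⟩, p.2) (⟨q.1, hq⟩, q.2)
      fun h => hne (congrArg (fun r => (r.1 : X)) h)).resolve_right
        fun h => hne (congrArg Subtype.val h.choose_spec)
    exact .inl ⟨⟨i, k⟩, ⟨_, hpk, rfl⟩, ⟨_, hqk, rfl⟩⟩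
  · rintro _ _ hpq ⟨i, k⟩ ⟨p, hp, rfl⟩ ⟨q, hq, rfl⟩ ⟨j, l⟩ ⟨p', hp', hpp'⟩ ⟨q', hq', hqq'⟩
    obtain rfl := hB.block_unique _ _ (hfst hpq hp hq) i p.1.2 q.1.2 j
      (congrArg Prod.fst hpp' ▸ p'.1.2) (congrArg Prod.fst hqq' ▸ q'.1.2)
    obtain rfl := hf i hpp'
    obtain rfl := hf i hqq'
    rw [(hD i).block_unique _ _ (fun h => hpq (congrArg _ h)) k hp hq l hp' hq']
  · rintro _ _ hpq ⟨i, k⟩ ⟨p, hp, rfl⟩ ⟨q, hq, rfl⟩ _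
    exact hB.not_both _ _ (hfst hpq hp hq) i p.1.2 q.1.2 ()
  · rw [Set.ncard_image_of_injective _ (hf i)]
    exact hL i k

end HasGDD

/-! ### Difference families -/

lemma ncard_translate {G : Type*} [AddGroup G] (D : Finset G) (g : G) :
    {x | x - g ∈ D}.ncard = D.card := by
  rw [← Set.ncard_coe_finset]
  exact Set.ncard_preimage_of_injective_subset_range sub_left_injective
    fun x _ => ⟨x + g, by simp⟩

lemma ncard_ker_class {G H : Type*} [AddGroup G] [AddGroup H] (φ : G →+ H) (x : G) :
    {y | Setoid.ker φ x y}.ncard = {d | φ d = 0}.ncard := by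
  have hclass : {y | Setoid.ker φ x y} = (· - x) ⁻¹' {d | φ d = 0} := by
    ext y
    simp [Setoid.ker_def, sub_eq_zero, eq_comm (a := φ x)]
  rw [hclass]
  exact Set.ncard_preimage_of_injective_subset_range sub_left_injective
    fun d _ => ⟨d + x, by simp⟩

/-- A family `D` of base blocks in an abelian group, relative to the kernels of the homomorphisms
`φ c`: every nonzero `d` is a difference of exactly one of the base blocks, in exactly one way,
unless it lies in one of the kernels, in which case that kernel is unique and `d` is not a
difference at all. -/
structure IsDifferenceFamily {G H J C : Type*} [AddGroup G] [AddGroup H] (D : J → Finset G)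
    (φ : C → G →+ H) : Prop where
  exists_eq : ∀ d ≠ 0, (∃ j, ∃ a ∈ D j, a + d ∈ D j) ∨ ∃ c, φ c d = 0
  eq_unique : ∀ d ≠ 0, ∀ j, ∀ a ∈ D j, a + d ∈ D j → ∀ j', ∀ a' ∈ D j', a' + d ∈ D j' →
    j = j' ∧ a = a'
  ker_unique : ∀ d ≠ 0, ∀ c, φ c d = 0 → ∀ c', φ c' d = 0 → c = c'
  not_both : ∀ d ≠ 0, ∀ j, ∀ a ∈ D j, a + d ∈ D j → ∀ c, φ c d ≠ 0

namespace IsDifferenceFamily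

variable {G H J C : Type*} [AddCommGroup G] [AddGroup H] {D : J → Finset G} {φ : C → G →+ H}

lemma isPBD (h : IsDifferenceFamily D φ) :
    IsPBD (fun b : J × G => {x | x - b.2 ∈ D b.1}) (fun c => Setoid.ker (φ c)) := by
  have hsub (x y g : G) : y - g = x - g + (y - x) := by abel
  have hker (c : C) (x y : G) : Setoid.ker (φ c) x y ↔ φ c (y - x) = 0 := by
    rw [Setoid.ker_def, map_sub, sub_eq_zero, eq_comm]
  have hne {x y : G} (hxy : x ≠ y) : y - x ≠ 0 := sub_ne_zero.2 hxy.symm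
  refine ⟨fun x y hxy => ?_, fun x y hxy i hx hy j hx' hy' => ?_, fun x y hxy c hc d hd => ?_,
    fun x y hxy i hx hy c hc => ?_⟩
  · obtain ⟨j, a, ha, had⟩ | ⟨c, hc⟩ := h.exists_eq _ (hne hxy)
    · exact .inl ⟨(j, x - a), by simpa using ha, by
        rwa [Set.mem_ofPred_eq, hsub x y, sub_sub_cancel]⟩
    · exact .inr ⟨c, (hker c x y).2 hc⟩
  · obtain ⟨hij, hg⟩ := h.eq_unique _ (hne hxy) i.1 _ hx (hsub x y i.2 ▸ hy) j.1 _ hx'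
      (hsub x y j.2 ▸ hy')
    exact Prod.ext hij (sub_right_injective hg)
  · exact h.ker_unique _ (hne hxy) c ((hker c x y).1 hc) d ((hker d x y).1 hd)
  · exact h.not_both _ (hne hxy) i.1 _ hx (hsub x y i.2 ▸ hy) c ((hker c x y).1 hc)

lemma hasGDD {G H J : Type} [AddCommGroup G] [AddGroup H] {D : J → Finset G} {φ : G →+ H}
    (h : IsDifferenceFamily D fun _ : Unit => φ) {K : Set ℕ} (hK : ∀ j, (D j).card ∈ K) :
    HasGDD (Setoid.ker φ) K :=
  ⟨J × G, _, h.isPBD, fun b => (ncard_translate (D b.1) b.2).symm ▸ hK b.1⟩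

end IsDifferenceFamily

lemma hasGDD_three_pow_five : HasGDD (Setoid.ker (Prod.fst : Fin 5 × ZMod 3 → Fin 5)) {4} := by
  have h : IsDifferenceFamily
      (fun _ : Unit => ({(0, 0), (1, 1), (3, 0), (2, 1)} : Finset (ZMod 5 × ZMod 3)))
      (fun _ : Unit => AddMonoidHom.fst (ZMod 5) (ZMod 3)) := by
    refine ⟨?_, ?_, ?_, ?_⟩ <;> decide +kernel
  exact h.hasGDD fun _ => rfl

/-- The cross product by `v`, whose kernel is the line spanned by `v`. -/
def crossHom (v : Fin 3 → ZMod 3) : (Fin 3 → ZMod 3) →+ (Fin 3 → ZMod 3) :=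
  (crossProduct v).toAddMonoidHom

lemma hasGDD_three_pow_nine : HasGDD (Setoid.ker (crossHom ![1, 2, 2])) {4} := by
  have h : IsDifferenceFamily
      (![{0, ![1, 0, 0], ![0, 1, 0], ![0, 0, 1]}, {0, ![1, 1, 0], ![1, 2, 1], ![2, 2, 2]}] :
        Fin 2 → Finset (Fin 3 → ZMod 3))
      (fun _ : Unit => crossHom ![1, 2, 2]) := by
    refine ⟨?_, ?_, ?_, ?_⟩ <;> decide +kernel
  exact h.hasGDD (by decide)

lemma ncard_ker_crossHom (v : Fin 3 → ZMod 3) (hv : v ≠ 0) : {d | crossHom v d = 0}.ncard = 3 := by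
  rw [Set.ncard_eq_toFinset_card', Set.toFinset_ofPred]
  revert v
  decide +kernel

/-- Seven points at infinity are added to the affine space of dimension three over the field with
three elements, one for each of seven directions; the other six directions are the differences of
the base block. -/
lemma thirtyFour_mem_kirkmanFrameOrders : 34 ∈ kirkmanFrameOrders := by
  have h7 : 7 ∈ kirkmanFrameOrders :=
    mem_kirkmanFrameOrders_of_isPrimePow Nat.prime_seven.isPrimePow rfl
  let v : Fin 7 → Fin 3 → ZMod 3 :=
    ![![0, 1, 1], ![1, 0, 1], ![1, 1, 0], ![1, 1, 1], ![1, 1, 2], ![1, 2, 1], ![1, 2, 2]]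
  have hv : ∀ c, v c ≠ 0 := by decide
  have h : IsDifferenceFamily
      (fun _ : Unit => ({0, ![1, 0, 0], ![0, 1, 0], ![0, 0, 1]} : Finset (Fin 3 → ZMod 3)))
      (fun c => crossHom (v c)) := by
    refine ⟨?_, ?_, ?_, ?_⟩ <;> decide +kernel
  have hclass (c : Fin 7) (x : Fin 3 → ZMod 3) :
      {y | Setoid.ker (crossHom (v c)) x y}.ncard + 1 ∈ kirkmanFrameOrders := by
    rw [ncard_ker_class, ncard_ker_crossHom _ (hv c)]
    exact four_mem_kirkmanFrameOrders
  simpa using h.isPBD.card_add_card_mem_kirkmanFrameOrders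
    (fun b => (ncard_translate _ b.2).symm ▸ four_mem_kirkmanFrameOrders) hclass (by simpa using h7)

/-! ### Truncated transversal designs -/

/-- An orthogonal array of strength two and index one, with rows `τ w`: any two columns contain
each pair of symbols exactly once. -/
def IsOrthogonalArray {Q I A : Type*} (τ : Q → I → A) : Prop :=
  Pairwise fun i j => Function.Bijective fun w => (τ w i, τ w j)

namespace IsOrthogonalArray

variable {Q I A : Type*} {τ : Q → I → A}

lemma isPBD (h : IsOrthogonalArray τ) :
    IsPBD (fun w => Set.range fun i => (i, τ w i))
      (fun _ : Unit => Setoid.ker (Prod.fst : I × A → I)) where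
  exists_line := by
    rintro ⟨i, a⟩ ⟨j, b⟩ -
    obtain rfl | hij := eq_or_ne i j
    · exact .inr ⟨(), rfl⟩
    · obtain ⟨w, hw⟩ := (h hij).2 (a, b)
      simp only [Prod.mk.injEq] at hw
      exact .inl ⟨w, ⟨i, by simp [hw.1]⟩, ⟨j, by simp [hw.2]⟩⟩
  block_unique := by
    rintro _ _ hxy w ⟨i, rfl⟩ ⟨j, rfl⟩ w' ⟨_, hi⟩ ⟨_, hj⟩
    simp only [Prod.mk.injEq] at hi hj
    obtain ⟨⟨rfl, hi⟩, rfl, hj⟩ := hi, hj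
    exact (h fun hij => hxy (by rw [hij])).1 (Prod.ext hi.symm hj.symm)
  class_unique _ _ _ _ _ _ _ := rfl
  not_both := by
    rintro _ _ hxy w ⟨i, rfl⟩ ⟨j, rfl⟩ _ (rfl : i = j)
    exact hxy rfl

end IsOrthogonalArray

lemma hasGDD_three_pow_four : HasGDD (Setoid.ker (Prod.fst : Fin 4 × ZMod 3 → Fin 4)) {4} := by
  have h : IsOrthogonalArray tetracode := by
    unfold IsOrthogonalArray Pairwise
    decide +kernel
  refine ⟨_, _, h.isPBD, fun w => ?_⟩
  have hinj : Function.Injective fun i => (i, tetracode w i) := fun i j h => congrArg Prod.fst h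
  rw [← Set.image_univ, Set.ncard_image_of_injective _ hinj, Set.ncard_univ]
  simp

/-- Every point of a design with block sizes four and five is given weight three. -/
lemma HasGDD.three_mul_card_add_one_mem_kirkmanFrameOrders {X : Type*} [Finite X] {s : Setoid X}
    (h : HasGDD s {4, 5}) (hclass : ∀ x, 3 * {y | s x y}.ncard + 1 ∈ kirkmanFrameOrders) :
    3 * Nat.card X + 1 ∈ kirkmanFrameOrders := by
  have hW : ∀ k ∈ ({4, 5} : Set ℕ),
      HasGDD (Setoid.ker (Prod.fst : Fin k × ZMod 3 → Fin k)) {4} := by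
    rintro k (rfl | rfl)
    exacts [hasGDD_three_pow_four, hasGDD_three_pow_five]
  have hcard : Nat.card (X × ZMod 3) = 3 * Nat.card X := by simp [mul_comm]
  rw [← hcard]
  refine ((h.comap_fst hW).mono ?_).card_add_one_mem_kirkmanFrameOrders fun x => ?_
  · exact Set.singleton_subset_iff.2 four_mem_kirkmanFrameOrders
  · have hprod : {y | s.comap (Prod.fst : X × ZMod 3 → X) x y} = {y | s x.1 y} ×ˢ Set.univ :=
      Set.ext fun y => (and_iff_left trivial).symm
    rw [hprod, Set.ncard_prod, Set.ncard_univ, Nat.card_zmod, mul_comm]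
    exact hclass x.1

/-- The array whose row at the point `(u, v)` of the affine plane over `A` records the lines through
that point in the parallel classes `v = const` (column `none`) and `u + c i * v = const`. -/
def lineArray {A I : Type*} [CommRing A] (c : I → A) (w : A × A) : Option I → A :=
  fun i => i.elim w.2 fun i => w.1 + c i * w.2

lemma isOrthogonalArray_lineArray {A I : Type*} [CommRing A] {c : I → A}
    (hc : Pairwise fun i j => IsUnit (c i - c j)) :
    IsOrthogonalArray (lineArray c) := by
  have hnone (i : I) :
      Function.Bijective fun w => (lineArray c w none, lineArray c w (some i)) := by
    refine ⟨fun w w' h => ?_, fun p => ⟨(p.2 - c i * p.1, p.1), by simp [lineArray]⟩⟩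
    obtain ⟨h₁, h₂⟩ : w.2 = w'.2 ∧ w.1 + c i * w.2 = w'.1 + c i * w'.2 := by
      simpa [lineArray] using h
    exact Prod.ext (by simpa [h₁] using h₂) h₁
  rintro (_ | i) (_ | j) hij
  · exact absurd rfl hij
  · exact hnone j
  · exact (Equiv.prodComm A A).bijective.comp (hnone i)
  · obtain ⟨d, hd⟩ := hc fun h => hij (congrArg some h)
    refine ⟨fun w w' h => ?_, fun p => ?_⟩
    · obtain ⟨h₁, h₂⟩ : w.1 + c i * w.2 = w'.1 + c i * w'.2 ∧
          w.1 + c j * w.2 = w'.1 + c j * w'.2 := by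
        simpa [lineArray] using h
      have hw : w.2 = w'.2 :=
        d.isUnit.mul_left_cancel (by linear_combination (w.2 - w'.2) * hd + h₁ - h₂)
      exact Prod.ext (by simpa [hw] using h₁) hw
    · have hp : (d : A) * (↑d⁻¹ * (p.1 - p.2)) = p.1 - p.2 := d.mul_inv_cancel_left _
      refine ⟨(p.1 - c i * (↑d⁻¹ * (p.1 - p.2)), ↑d⁻¹ * (p.1 - p.2)), Prod.ext ?_ ?_⟩
      · simp [lineArray]
      · simp only [lineArray, Option.elim_some]
        linear_combination ↑d⁻¹ * (p.1 - p.2) * hd - hp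

section Truncation

variable {A I : Type*} (M : Set A)

/-- The inclusion of the points that remain after truncating the group `none` to `M`. -/
def truncation : I × A ⊕ M → Option I × A :=
  Sum.elim (Prod.map some id) fun m => (none, m)

lemma truncation_injective : Function.Injective (truncation M : I × A ⊕ M → Option I × A) := by
  rintro (⟨i, a⟩ | m) (⟨j, b⟩ | m') h <;> simp_all [truncation, Subtype.ext_iff]

lemma ncard_truncation_preimage [Finite I] (f : Option I → A) :
    (truncation M ⁻¹' Set.range fun i => (i, f i)).ncard =
      Nat.card I + {m : M | m = f none}.ncard := by
  have hunion : (truncation M ⁻¹' Set.range fun i => (i, f i)) =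
      Set.range (fun i => Sum.inl (i, f (some i))) ∪ Sum.inr '' {m : M | m = f none} := by
    ext (⟨i, a⟩ | m) <;> simp [truncation, eq_comm]
  have hinj : Function.Injective fun i => (Sum.inl (i, f (some i)) : I × A ⊕ M) :=
    fun i j h => congrArg Prod.fst (Sum.inl_injective h)
  have hsub : {m : M | m = f none}.Subsingleton :=
    fun m hm m' hm' => Subtype.ext (hm.trans hm'.symm)
  rw [hunion, Set.ncard_union_eq ?_ (Set.finite_range _) (hsub.finite.image _),
    Set.ncard_image_of_injective _ Sum.inr_injective, ← Set.image_univ,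
    Set.ncard_image_of_injective _ hinj, Set.ncard_univ]
  rw [Set.disjoint_left]
  rintro _ ⟨i, rfl⟩ ⟨m, -, ⟨⟩⟩

lemma ncard_truncation_class_inl (p : I × A) :
    {q | (Setoid.ker Prod.fst).comap (truncation M) (.inl p) q}.ncard = Nat.card A := by
  have hclass : {q | (Setoid.ker Prod.fst).comap (truncation M) (.inl p) q} =
      Set.range fun a => Sum.inl (p.1, a) := by
    ext (⟨j, b⟩ | m) <;> simp [truncation, Setoid.ker_def]
  have hinj : Function.Injective fun a => (Sum.inl (p.1, a) : I × A ⊕ M) :=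
    fun a b h => congrArg Prod.snd (Sum.inl_injective h)
  rw [hclass, ← Set.image_univ, Set.ncard_image_of_injective _ hinj, Set.ncard_univ]

lemma ncard_truncation_class_inr (m : M) :
    {q : I × A ⊕ M | (Setoid.ker Prod.fst).comap (truncation M) (.inr m) q}.ncard = M.ncard := by
  have hclass : {q : I × A ⊕ M | (Setoid.ker Prod.fst).comap (truncation M) (.inr m) q} =
      Sum.inr '' Set.univ := by
    ext (⟨j, b⟩ | m) <;> simp [truncation, Setoid.ker_def]
  rw [hclass, Set.ncard_image_of_injective _ Sum.inr_injective, Set.ncard_univ,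
    Nat.card_coe_set_eq]

end Truncation

lemma hasGDD_truncation {A : Type} {I : Type*} [CommRing A] [Finite I] {c : I → A}
    (hc : Pairwise fun i j => IsUnit (c i - c j)) (M : Set A) :
    HasGDD ((Setoid.ker Prod.fst).comap (truncation M : I × A ⊕ M → Option I × A))
      {Nat.card I, Nat.card I + 1} := by
  refine ⟨_, _, (isOrthogonalArray_lineArray hc).isPBD.comap (truncation_injective M), fun w => ?_⟩
  have hsub : {m : M | m = lineArray c w none}.Subsingleton :=
    fun m hm m' hm' => Subtype.ext (hm.trans hm'.symm)
  rw [ncard_truncation_preimage]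
  obtain h | ⟨m, h⟩ := hsub.eq_empty_or_singleton <;> simp [h]

/-- Four elements of a ring whose differences are units give a transversal design with five groups,
one of which is truncated to `M`. -/
lemma truncation_mem_kirkmanFrameOrders {A : Type} [CommRing A] [Finite A] {c : Fin 4 → A}
    (hc : Pairwise fun i j => IsUnit (c i - c j)) (M : Set A)
    (hA : 3 * Nat.card A + 1 ∈ kirkmanFrameOrders) (hM : 3 * M.ncard + 1 ∈ kirkmanFrameOrders) :
    3 * (4 * Nat.card A + M.ncard) + 1 ∈ kirkmanFrameOrders := by
  have hGDD : HasGDD ((Setoid.ker Prod.fst).comap (truncation M : Fin 4 × A ⊕ M → _)) {4, 5} := by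
    simpa using hasGDD_truncation hc M
  have hcard : Nat.card (Fin 4 × A ⊕ M) = 4 * Nat.card A + M.ncard := by simp
  rw [← hcard]
  refine hGDD.three_mul_card_add_one_mem_kirkmanFrameOrders ?_
  rintro (p | m)
  · rwa [ncard_truncation_class_inl]
  · rwa [ncard_truncation_class_inr]

/-- The orders of finite commutative rings containing four elements whose differences are units. -/
def unitDifferenceOrders : Set ℕ :=
  {n | ∃ (A : Type) (_ : CommRing A) (_ : Finite A) (c : Fin 4 → A),
    Nat.card A = n ∧ Pairwise fun i j => IsUnit (c i - c j)}

lemma mem_unitDifferenceOrders_of_isPrimePow {q : ℕ} (hq : IsPrimePow q) (h4 : 4 ≤ q) :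
    q ∈ unitDifferenceOrders := by
  obtain ⟨p, k, hp, hk, rfl⟩ := hq
  have : Fact p.Prime := ⟨hp.nat_prime⟩
  have hcard : Nat.card (GaloisField p k) = p ^ k := GaloisField.card p k hk.ne'
  have := Nat.finite_of_card_ne_zero (hcard.trans_ne (by omega))
  obtain ⟨c⟩ : Nonempty (Fin 4 ↪ GaloisField p k) := by
    have := Fintype.ofFinite (GaloisField p k)
    exact Function.Embedding.nonempty_of_card_le
      (by rwa [Fintype.card_fin, Fintype.card_eq_nat_card, hcard])
  exact ⟨GaloisField p k, inferInstance, inferInstance, c, hcard, fun i j hij =>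
    (sub_ne_zero.2 (c.injective.ne hij)).isUnit⟩

lemma mem_unitDifferenceOrders_of_coprime {n : ℕ} (hn : n.Coprime 6) :
    n ∈ unitDifferenceOrders := by
  have hdvd : ∀ i j : Fin 4, i ≠ j → ((i : ℤ) - j) ∣ 6 := by decide
  have : NeZero n := ⟨by rintro rfl; simp at hn⟩
  refine ⟨ZMod n, inferInstance, inferInstance, fun i => ((i : ℤ) : ZMod n), Nat.card_zmod n,
    fun i j hij => ?_⟩
  beta_reduce
  rw [← Int.cast_sub, ZMod.coe_int_isUnit_iff_isCoprime]
  exact (Nat.isCoprime_iff_coprime.2 hn).of_isCoprime_of_dvd_right (hdvd i j hij)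

lemma three_mul_add_mem_kirkmanFrameOrders {n m : ℕ} (hn : n ∈ unitDifferenceOrders) (hmn : m ≤ n)
    (hn' : 3 * n + 1 ∈ kirkmanFrameOrders) (hm : 3 * m + 1 ∈ kirkmanFrameOrders) :
    3 * (4 * n + m) + 1 ∈ kirkmanFrameOrders := by
  obtain ⟨A, _, _, c, rfl, hc⟩ := hn
  obtain ⟨M, -, rfl⟩ := Set.exists_subset_card_eq (hmn.trans_eq (Set.ncard_univ A).symm)
  exact truncation_mem_kirkmanFrameOrders hc M hn' hm

lemma exists_coprime_six_add (q : ℕ) : ∃ j ≤ 3, (q + j).Coprime 6 := by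
  have hmod : ∀ r < 6, ∃ j ≤ 3, (r + j).Coprime 6 := by decide
  obtain ⟨j, hj, hcop⟩ := hmod (q % 6) (Nat.mod_lt q (by norm_num))
  refine ⟨j, hj, ?_⟩
  rwa [← Nat.mod_add_div q 6, add_right_comm, Nat.coprime_add_mul_left_left]

lemma exists_unitDifferenceOrder {t : ℕ} (ht : 16 ≤ t) (h26 : t ≠ 26) (h27 : t ≠ 27) :
    ∃ n ∈ unitDifferenceOrders, 4 * n ≤ t ∧ t ≤ 5 * n := by
  have hprimePow : ∀ q ∈ [4, 5, 7, 9, 11, 13, 16], q ∈ unitDifferenceOrders := fun q hq =>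
    mem_unitDifferenceOrders_of_isPrimePow (by revert q; decide +kernel) (by revert q; decide)
  obtain ht | ht := lt_or_ge t 80
  · obtain ⟨q, hq, hqt⟩ : ∃ q ∈ [4, 5, 7, 9, 11, 13, 16], 4 * q ≤ t ∧ t ≤ 5 * q := by
      simp only [List.mem_cons, List.not_mem_nil, or_false, exists_eq_or_imp, Nat.reduceMul,
        ↓existsAndEq, true_and]
      omega
    exact ⟨q, hprimePow q hq, hqt⟩
  · obtain ⟨n, hn, hnt⟩ : ∃ n, n.Coprime 6 ∧ n ≤ t / 4 ∧ t / 4 ≤ n + 3 := by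
      obtain ⟨j, hj, hcop⟩ := exists_coprime_six_add (t / 4 - 3)
      exact ⟨_, hcop, by omega, by omega⟩
    exact ⟨n, mem_unitDifferenceOrders_of_coprime hn, by omega⟩

/-! ### Existence of Kirkman triple systems -/

section ThreePow

variable {X : Type*} [Finite X] {s : Setoid X} (h : HasGDD s {4})
  (hclass : ∀ x, {y | s x y}.ncard = 3)

include h hclass

lemma HasGDD.card_add_one_mem_of_ncard_class_eq_three : Nat.card X + 1 ∈ kirkmanFrameOrders :=
  (h.mono (Set.singleton_subset_iff.2 four_mem_kirkmanFrameOrders)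
    ).card_add_one_mem_kirkmanFrameOrders fun x => by
      rw [hclass]
      exact four_mem_kirkmanFrameOrders

lemma HasGDD.three_mul_card_add_one_mem_of_ncard_class_eq_three :
    3 * Nat.card X + 1 ∈ kirkmanFrameOrders :=
  (h.mono (by simp)).three_mul_card_add_one_mem_kirkmanFrameOrders fun x => by
    rw [hclass]
    exact ten_mem_kirkmanFrameOrders

end ThreePow

lemma ncard_ker_fst_class {X Y : Type*} (x : X × Y) :
    {y | Setoid.ker (Prod.fst : X × Y → X) x y}.ncard = Nat.card Y := by
  have hclass : {y | Setoid.ker (Prod.fst : X × Y → X) x y} = {x.1} ×ˢ Set.univ := by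
    ext y
    simp [Setoid.ker_def, eq_comm]
  rw [hclass, Set.ncard_prod, Set.ncard_singleton, Set.ncard_univ, one_mul]

lemma mem_kirkmanFrameOrders_of_three_pow_five :
    16 ∈ kirkmanFrameOrders ∧ 46 ∈ kirkmanFrameOrders := by
  have hclass (x : Fin 5 × ZMod 3) := (ncard_ker_fst_class x).trans (Nat.card_zmod 3)
  simpa using And.intro
    (hasGDD_three_pow_five.card_add_one_mem_of_ncard_class_eq_three hclass)
    (hasGDD_three_pow_five.three_mul_card_add_one_mem_of_ncard_class_eq_three hclass)

lemma mem_kirkmanFrameOrders_of_three_pow_nine :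
    28 ∈ kirkmanFrameOrders ∧ 82 ∈ kirkmanFrameOrders := by
  have hclass (x : Fin 3 → ZMod 3) :
      {y | Setoid.ker (crossHom ![1, 2, 2]) x y}.ncard = 3 := by
    rw [ncard_ker_class, ncard_ker_crossHom _ (by decide)]
  simpa using And.intro
    (hasGDD_three_pow_nine.card_add_one_mem_of_ncard_class_eq_three hclass)
    (hasGDD_three_pow_nine.three_mul_card_add_one_mem_of_ncard_class_eq_three hclass)

lemma three_mul_add_one_mem_kirkmanFrameOrders_of_small {t : ℕ}
    (ht : t < 16 ∨ t = 26 ∨ t = 27) : 3 * t + 1 ∈ kirkmanFrameOrders := by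
  have hprimePow : ∀ q ∈ [7, 13, 19, 25, 31, 37, 43, 79], q ∈ kirkmanFrameOrders := fun q hq =>
    mem_kirkmanFrameOrders_of_isPrimePow (by revert q; decide +kernel) (by revert q; decide)
  have htriple : ∀ r ∈ [7, 13], 3 * r + 1 ∈ kirkmanFrameOrders := fun r hr =>
    three_mul_add_one_mem_kirkmanFrameOrders_of_mem (hprimePow r (by revert r; decide))
  obtain ht | rfl | rfl := ht
  · interval_cases t
    · exact one_mem_kirkmanFrameOrders
    · exact four_mem_kirkmanFrameOrders
    · exact hprimePow 7 (by simp)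
    · exact ten_mem_kirkmanFrameOrders
    · exact hprimePow 13 (by simp)
    · exact mem_kirkmanFrameOrders_of_three_pow_five.1
    · exact hprimePow 19 (by simp)
    · exact htriple 7 (by simp)
    · exact hprimePow 25 (by simp)
    · exact mem_kirkmanFrameOrders_of_three_pow_nine.1
    · exact hprimePow 31 (by simp)
    · exact thirtyFour_mem_kirkmanFrameOrders
    · exact hprimePow 37 (by simp)
    · exact htriple 13 (by simp)
    · exact hprimePow 43 (by simp)
    · exact mem_kirkmanFrameOrders_of_three_pow_five.2
  · exact hprimePow 79 (by simp)
  · exact mem_kirkmanFrameOrders_of_three_pow_nine.2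

theorem three_mul_add_one_mem_kirkmanFrameOrders (t : ℕ) : 3 * t + 1 ∈ kirkmanFrameOrders := by
  induction t using Nat.strong_induction_on with
  | _ t ih =>
    by_cases ht : t < 16 ∨ t = 26 ∨ t = 27
    · exact three_mul_add_one_mem_kirkmanFrameOrders_of_small ht
    · push Not at ht
      obtain ⟨n, hn, hnt, htn⟩ := exists_unitDifferenceOrder ht.1 ht.2.1 ht.2.2
      obtain ⟨m, rfl⟩ := Nat.exists_eq_add_of_le hnt
      exact three_mul_add_mem_kirkmanFrameOrders hn (by omega) (ih n (by omega)) (ih m (by omega))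

lemma exists_isKTS (t : ℕ) :
    ∃ s : Fin (3 * t + 1) → Setoid (Fin (6 * t + 3)), IsKTS s := by
  obtain ⟨s, hs⟩ := three_mul_add_one_mem_kirkmanFrameOrders t
  have hcard : Fintype.card (Fin (6 * t + 3)) =
      Fintype.card (Option (Fin (3 * t + 1) × Bool)) := by
    simp only [Fintype.card_fin, Fintype.card_option, Fintype.card_prod, Fintype.card_bool]
    ring
  let e : Fin (6 * t + 3) ≃ Option (Fin (3 * t + 1) × Bool) := Fintype.equivOfCardEq hcard
  exact ⟨_, hs.isKTS.comap_equiv e⟩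

/-! ### Blow-ups of parallel classes -/

section Blowup

variable {P N : Type*}

/-- The graph on `P × N` that blows up every class of `s` to the complete multipartite graph whose
parts are the fibres over the points of the class. -/
def blowup (s : Setoid P) (N : Type*) : SimpleGraph (P × N) where
  Adj x y := x.1 ≠ y.1 ∧ s x.1 y.1
  symm := ⟨fun _ _ h => ⟨h.1.symm, s.symm' h.2⟩⟩
  loopless := ⟨fun _ h => h.1 rfl⟩

variable {s : Setoid P}

lemma rel_of_reachable_blowup {x y : P × N} (h : (blowup s N).Reachable x y) : s x.1 y.1 := by
  obtain ⟨w⟩ := h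
  induction w with
  | nil => exact s.refl' _
  | cons hadj _ ih => exact s.trans' hadj.2 ih

lemma reachable_blowup_iff {x y : P × N} (hs : {q | s x.1 q}.Nontrivial) :
    (blowup s N).Reachable x y ↔ s x.1 y.1 := by
  refine ⟨rel_of_reachable_blowup, fun h => ?_⟩
  obtain hne | heq := ne_or_eq x.1 y.1
  · exact Adj.reachable ⟨hne, h⟩
  · obtain ⟨q, hq, hqx⟩ := hs.exists_ne x.1
    have hxq : (blowup s N).Adj x (q, x.2) := ⟨hqx.symm, hq⟩
    have hqy : (blowup s N).Adj (q, x.2) y := ⟨heq ▸ hqx, heq ▸ s.symm' hq⟩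
    exact hxq.reachable.trans hqy.reachable

lemma isHFactor_K777_blowup (hs : ∀ p, {q | s p q}.ncard = 3) (hN : Nat.card N = 7) :
    IsHFactor K777 (blowup s N) := by
  refine ConnectedComponent.ind fun v => ?_
  have hmem (x : P × N) : x ∈ ((blowup s N).connectedComponentMk v).supp ↔ s v.1 x.1 := by
    have hv : {q | s v.1 q}.Nontrivial :=
      (Set.one_lt_ncard_iff_nontrivial_and_finite.1 (by simp [hs])).1
    rw [ConnectedComponent.mem_supp_iff, ConnectedComponent.eq, reachable_comm,
      reachable_blowup_iff hv]
  have hP : Nat.card {q // s v.1 q} = 3 := hs v.1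
  have := Nat.finite_of_card_ne_zero (hN.trans_ne (by norm_num))
  have := Nat.finite_of_card_ne_zero (hP.trans_ne (by norm_num))
  obtain ⟨eN⟩ : Nonempty (N ≃ ZMod 7) := Finite.card_eq.1 (by rw [hN, Nat.card_zmod])
  obtain ⟨eP⟩ : Nonempty ({q // s v.1 q} ≃ ZMod 3) :=
    Finite.card_eq.1 (by rw [hP, Nat.card_zmod])
  refine ⟨⟨⟨fun x => (eN x.1.2, eP ⟨x.1.1, (hmem _).1 x.2⟩),
    fun z => ⟨(eP.symm z.2, eN.symm z.1), (hmem _).2 (eP.symm z.2).2⟩, fun _ => by simp,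
    fun _ => by simp⟩, fun {x y} => ?_⟩⟩
  have hxy : s x.1.1 y.1.1 := s.trans' (s.symm' ((hmem _).1 x.2)) ((hmem _).1 y.2)
  have hparts : eP ⟨x.1.1, (hmem _).1 x.2⟩ ≠ eP ⟨y.1.1, (hmem _).1 y.2⟩ ↔ x.1.1 ≠ y.1.1 := by
    simp
  exact hparts.trans (and_iff_left hxy).symm

end Blowup

/-- The edge set of `K_{(6t+3)(7)}` can be partitioned into `3t+1` `K_{7,7,7}`-factors,
where each `K_{7,7,7}`-factor has the parts of `K_{(6t+3)(7)}` as the partite sets of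
its tripartite components (vertices lying in the same part lie in the same component). -/
theorem KMulti_K777_factorization (t : ℕ) :
    ∃ F : Fin (3 * t + 1) → SimpleGraph (Fin (6 * t + 3) × Fin 7),
      (∀ i, F i ≤ KMulti t) ∧
      (∀ e ∈ (KMulti t).edgeSet, ∃! i, e ∈ (F i).edgeSet) ∧
      (∀ i, IsHFactor K777 (F i)) ∧
      (∀ i, ∀ x y : Fin (6 * t + 3) × Fin 7, x.1 = y.1 →
        (F i).connectedComponentMk x = (F i).connectedComponentMk y) := by
  obtain ⟨s, hs⟩ := exists_isKTS t
  have hclass (i p) : {q | s i p q}.Nontrivial :=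
    (Set.one_lt_ncard_iff_nontrivial_and_finite.1 (by simp [hs.ncard_class])).1
  refine ⟨fun i => blowup (s i) (Fin 7), fun i x y h => h.1, fun e => ?_,
    fun i => isHFactor_K777_blowup (hs.ncard_class i) (Nat.card_fin 7), fun i x y hxy => ?_⟩
  · induction e with
    | _ x y =>
      intro hne
      exact (existsUnique_congr fun i => and_iff_right hne).2 (hs.existsUnique x.1 y.1 hne)
  · rw [ConnectedComponent.eq, reachable_blowup_iff (hclass i x.1), hxy]
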